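/- arXiv:2204.03132 — 2 statements merged into one kernel-verified Lean document; each statement's English description precedes it below -/
import Mathlib

section
/- Suppose F : Z → ℝ^n is α-strongly monotone with α ≥ 0 ((z − z')ᵀ(F(z) − F(z')) ≥ α‖z − z'‖² for all z, z' ∈ Z) and G : Z → ℝ is ℓ_G-smooth and convex, and let the iterates (z_k^{md}, z_k, w_k, z_k^{ag}) be generated by the AMP iteration. Then for all z ∈ Z: Q(z_{k+1}^{ag}, z) − (1 − α_k) Q(z_k^{ag}, z) ≤ α_k (z_{k+1} − z)ᵀ(F(z_{k+1}) + ∇G(z_k^{md})) + (α_k² ℓ_G / 2)‖z_{k+1} − w_k‖² − α_k α ‖z_{k+1} − z‖². -/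
open scoped InnerProductSpace

noncomputable section

/-- `p = argmin_{z ∈ Z} γ ⟪z - w, u⟫ + ½ ‖z - w‖²`, i.e. `p` is the Euclidean projection
onto `Z` of `w - γ u`. -/
def IsArgminStep {E : Type*} [NormedAddCommGroup E] [InnerProductSpace ℝ E]
    (Z : Set E) (w : E) (γ : ℝ) (u : E) (p : E) : Prop :=
  p ∈ Z ∧ ∀ z ∈ Z, γ * ⟪p - w, u⟫_ℝ + ‖p - w‖ ^ 2 / 2 ≤ γ * ⟪z - w, u⟫_ℝ + ‖z - w‖ ^ 2 / 2

/-- The accelerated mirror-prox (AMP) iteration on `Z` for the operator `F` and the gradient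
`G'` of `G`, with parameters `a k` (the `α_k`) and `g k` (the `γ_k`), and iterates
`zmd k = z_k^{md}`, `z k = z_k`, `w k = w_k`, `zag k = z_k^{ag}` for `k ≥ 1`:
initialization `z 1 = z_1^{ag} = w 1 ∈ Z` and, for `k ≥ 1`,
`z_k^{md} = (1 - α_k) z_k^{ag} + α_k w_k`,
`z_{k+1} = argmin_{z ∈ Z} γ_k ⟪z - w_k, F(w_k) + ∇G(z_k^{md})⟫ + ½‖z - w_k‖²`,
`w_{k+1} = argmin_{z ∈ Z} γ_k ⟪z - w_k, F(z_{k+1}) + ∇G(z_k^{md})⟫ + ½‖z - w_k‖²`,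
`z_{k+1}^{ag} = (1 - α_k) z_k^{ag} + α_k z_{k+1}`. -/
def IsAMP {E : Type*} [NormedAddCommGroup E] [InnerProductSpace ℝ E]
    (Z : Set E) (F : E → E) (G' : E → E) (a g : ℕ → ℝ) (zmd z w zag : ℕ → E) : Prop :=
  z 1 = w 1 ∧ zag 1 = w 1 ∧ w 1 ∈ Z ∧
  ∀ k, 1 ≤ k →
    zmd k = (1 - a k) • zag k + a k • w k ∧
    IsArgminStep Z (w k) (g k) (F (w k) + G' (zmd k)) (z (k + 1)) ∧
    IsArgminStep Z (w k) (g k) (F (z (k + 1)) + G' (zmd k)) (w (k + 1)) ∧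
    zag (k + 1) = (1 - a k) • zag k + a k • z (k + 1)

/-!
The new aggregate point differs from `z_k^{md}` by `α_k (z_{k+1} - w_k)`, so the descent lemma at
`z_k^{md}` bounds `G (z_{k+1}^{ag})` with an error quadratic in `α_k ‖z_{k+1} - w_k‖`. Split the
displacement as `(1 - α_k) (z_k^{ag} - z_k^{md}) + α_k (z - z_k^{md}) + α_k (z_{k+1} - z)`: the
first two parts are absorbed by the tangent inequalities of the convex function `G` towards
`z_k^{ag}` and `z`, leaving only `α_k ⟪z_{k+1} - z, ∇G(z_k^{md})⟫`. The remaining term of the gap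
function is affine in its first argument, and strong monotonicity replaces `F(z)` by `F(z_{k+1})`.
-/

theorem le_add_mul_add_sq_of_deriv_right_le {φ φ' : ℝ → ℝ} {a b m c : ℝ} (hab : a ≤ b)
    (hφ : ContinuousOn φ (Set.Icc a b))
    (hφ' : ∀ t ∈ Set.Ico a b, HasDerivWithinAt φ (φ' t) (Set.Ici t) t)
    (hbound : ∀ t ∈ Set.Ico a b, φ' t ≤ m + c * (t - a)) :
    φ b ≤ φ a + m * (b - a) + c / 2 * (b - a) ^ 2 := by
  have hmodel (t : ℝ) : HasDerivAt (fun t => φ a + m * (t - a) + c / 2 * (t - a) ^ 2)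
      (m + c * (t - a)) t := by
    have hsub : HasDerivAt (fun t => t - a) 1 t := (hasDerivAt_id t).sub_const a
    exact (((hsub.const_mul m).const_add (φ a)).add ((hsub.pow 2).const_mul (c / 2))).congr_deriv
      (by ring)
  exact image_le_of_deriv_right_le_deriv_boundary hφ hφ' (by simp)
    (fun t _ => (hmodel t).continuousAt.continuousWithinAt)
    (fun t _ => (hmodel t).hasDerivWithinAt) hbound (Set.right_mem_Icc.2 hab)

section NormedSpace

variable {E : Type*} [NormedAddCommGroup E] [NormedSpace ℝ E] {s : Set E} {f : E → ℝ}

theorem hasDerivWithinAt_comp_lineMap {f' : StrongDual ℝ E} {x y : E} {t : ℝ}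
    (hf : HasFDerivWithinAt f f' s (AffineMap.lineMap x y t)) :
    HasDerivWithinAt (f ∘ AffineMap.lineMap x y) (f' (y - x))
      (AffineMap.lineMap x y ⁻¹' s : Set ℝ) t :=
  hf.comp_hasDerivWithinAt t AffineMap.hasDerivWithinAt_lineMap (Set.mapsTo_preimage _ _)

theorem add_fderiv_sub_le_of_convexOn {f' : StrongDual ℝ E} {x y : E} (hf : ConvexOn ℝ s f)
    (hx : x ∈ s) (hy : y ∈ s) (hf' : HasFDerivWithinAt f f' s x) :
    f x + f' (y - x) ≤ f y := by
  have hderiv : HasDerivWithinAt (f ∘ AffineMap.lineMap x y) (f' (y - x))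
      (AffineMap.lineMap x y ⁻¹' s : Set ℝ) 0 :=
    hasDerivWithinAt_comp_lineMap (by rwa [AffineMap.lineMap_apply_zero])
  have hslope := (hf.comp_affineMap (AffineMap.lineMap x y)).le_slope_of_hasDerivWithinAt
    (by simpa using hx) (by simpa using hy) zero_lt_one hderiv
  simp only [slope_def_field, Function.comp_apply, AffineMap.lineMap_apply_one,
    AffineMap.lineMap_apply_zero, sub_zero, div_one] at hslope
  linarith

variable {f' : E → StrongDual ℝ E} {L : ℝ}

theorem le_add_fderiv_sub_add_sq_of_norm_fderiv_sub_le {x y : E} (hs : StarConvex ℝ x s)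
    (hf' : ∀ p ∈ s, HasFDerivWithinAt f (f' p) s p)
    (hL : ∀ p ∈ s, ‖f' p - f' x‖ ≤ L * ‖p - x‖) (hy : y ∈ s) :
    f y ≤ f x + f' x (y - x) + L / 2 * ‖y - x‖ ^ 2 := by
  let γ : ℝ →ᵃ[ℝ] E := AffineMap.lineMap x y
  have hγ : Set.MapsTo γ (Set.Icc 0 1) s := fun t ht =>
    hs.segment_subset hy (lineMap_mem_segment ℝ x y ht)
  have hderiv (t : ℝ) (ht : t ∈ Set.Icc 0 1) :
      HasDerivWithinAt (f ∘ γ) (f' (γ t) (y - x)) (Set.Icc 0 1) t :=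
    (hasDerivWithinAt_comp_lineMap (hf' _ (hγ ht))).mono hγ
  have hgrowth (t : ℝ) (ht : t ∈ Set.Ico 0 1) :
      f' (γ t) (y - x) ≤ f' x (y - x) + L * ‖y - x‖ ^ 2 * (t - 0) := by
    have hdist : ‖γ t - x‖ = t * ‖y - x‖ := by
      simp [γ, AffineMap.lineMap_apply, norm_smul, abs_of_nonneg ht.1]
    have hincr : f' (γ t) (y - x) - f' x (y - x) ≤ L * (t * ‖y - x‖) * ‖y - x‖ :=
      calc f' (γ t) (y - x) - f' x (y - x)
          ≤ ‖(f' (γ t) - f' x) (y - x)‖ := Real.le_norm_self _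
        _ ≤ L * (t * ‖y - x‖) * ‖y - x‖ :=
          (f' (γ t) - f' x).le_of_opNorm_le
            (hdist ▸ hL _ (hγ (Set.Ico_subset_Icc_self ht))) _
    linarith
  have hle := le_add_mul_add_sq_of_deriv_right_le zero_le_one
    (fun t ht => (hderiv t ht).continuousWithinAt)
    (fun t ht => (hderiv t (Set.Ico_subset_Icc_self ht)).mono_of_mem_nhdsWithin
      (Icc_mem_nhdsGE_of_mem ht)) hgrowth
  simp only [γ, Function.comp_apply, AffineMap.lineMap_apply_one,
    AffineMap.lineMap_apply_zero] at hle
  linarith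

theorem image_combo_le_combo_add_fderiv_sub_add_sq {a : ℝ} {m u w y z : E}
    (hf : ConvexOn ℝ s f) (hf' : ∀ p ∈ s, HasFDerivWithinAt f (f' p) s p)
    (hL : ∀ p ∈ s, ‖f' p - f' m‖ ≤ L * ‖p - m‖) (ha : a ∈ Set.Icc 0 1)
    (hm : m = (1 - a) • u + a • w) (hu : u ∈ s) (hw : w ∈ s) (hy : y ∈ s) (hz : z ∈ s) :
    f ((1 - a) • u + a • z) ≤
      (1 - a) * f u + a * (f y + f' m (z - y)) + a ^ 2 * L / 2 * ‖z - w‖ ^ 2 := by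
  have ha' : 0 ≤ 1 - a := sub_nonneg.2 ha.2
  have hms : m ∈ s := hm ▸ hf.1 hu hw ha' ha.1 (sub_add_cancel 1 a)
  have hdescent := le_add_fderiv_sub_add_sq_of_norm_fderiv_sub_le (hf.1 hms) hf' hL
    (hf.1 hu hz ha' ha.1 (sub_add_cancel 1 a))
  have htangent_u : (1 - a) * (f m + f' m (u - m)) ≤ (1 - a) * f u :=
    mul_le_mul_of_nonneg_left (add_fderiv_sub_le_of_convexOn hf hms hu (hf' m hms)) ha'
  have htangent_y : a * (f m + f' m (y - m)) ≤ a * f y :=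
    mul_le_mul_of_nonneg_left (add_fderiv_sub_le_of_convexOn hf hms hy (hf' m hms)) ha.1
  have hlinear : f' m ((1 - a) • u + a • z - m) =
      (1 - a) * f' m (u - m) + a * f' m (y - m) + a * f' m (z - y) := by
    simp only [map_sub, map_add, map_smul, smul_eq_mul]
    ring
  have hnorm : ‖(1 - a) • u + a • z - m‖ ^ 2 = a ^ 2 * ‖z - w‖ ^ 2 := by
    rw [hm, add_sub_add_left_eq_sub, ← smul_sub, norm_smul, mul_pow, Real.norm_of_nonneg ha.1]
  rw [hlinear, hnorm] at hdescent
  linarith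

end NormedSpace

section InnerProductSpace

variable {E : Type*} [NormedAddCommGroup E] [InnerProductSpace ℝ E] {Z : Set E}
  {F G' : E → E} {G : E → ℝ}

/-- The gap function `Q(x, y) = G(x) - G(y) + ⟪x - y, F(y)⟫` of the composite variational
inequality with operator `F` and convex part `G`, measuring the quality of the candidate solution
`x` against the test point `y`. -/
def gapFunction (G : E → ℝ) (F : E → E) (x y : E) : ℝ :=
  G x - G y + ⟪x - y, F y⟫_ℝ

theorem gapFunction_combo_sub (G : E → ℝ) (F : E → E) (a : ℝ) (u z y : E) :
    gapFunction G F ((1 - a) • u + a • z) y - (1 - a) * gapFunction G F u y =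
      G ((1 - a) • u + a • z) - (1 - a) * G u - a * G y + a * ⟪z - y, F y⟫_ℝ := by
  simp only [gapFunction, inner_sub_left, inner_add_left, real_inner_smul_left]
  ring

theorem gapFunction_combo_sub_le [CompleteSpace E] {L α a : ℝ} {m u w y z : E}
    (hFz : α * ‖z - y‖ ^ 2 ≤ ⟪z - y, F z - F y⟫_ℝ) (hG : ConvexOn ℝ Z G)
    (hG' : ∀ x ∈ Z, HasGradientWithinAt G (G' x) Z x)
    (hL : ∀ x ∈ Z, ‖G' x - G' m‖ ≤ L * ‖x - m‖) (ha : a ∈ Set.Icc 0 1)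
    (hm : m = (1 - a) • u + a • w) (hu : u ∈ Z) (hw : w ∈ Z) (hy : y ∈ Z) (hz : z ∈ Z) :
    gapFunction G F ((1 - a) • u + a • z) y - (1 - a) * gapFunction G F u y ≤
      a * ⟪z - y, F z + G' m⟫_ℝ + a ^ 2 * L / 2 * ‖z - w‖ ^ 2 - a * α * ‖z - y‖ ^ 2 := by
  have hsmooth : G ((1 - a) • u + a • z) ≤
      (1 - a) * G u + a * (G y + ⟪z - y, G' m⟫_ℝ) + a ^ 2 * L / 2 * ‖z - w‖ ^ 2 := by
    rw [real_inner_comm]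
    exact image_combo_le_combo_add_fderiv_sub_add_sq
      (f' := fun x => InnerProductSpace.toDual ℝ E (G' x)) hG hG'
      (by simpa only [← map_sub, LinearIsometryEquiv.norm_map] using hL) ha hm hu hw hy hz
  have hmono : a * (α * ‖z - y‖ ^ 2) ≤ a * ⟪z - y, F z - F y⟫_ℝ :=
    mul_le_mul_of_nonneg_left hFz ha.1
  rw [inner_sub_right] at hmono
  rw [gapFunction_combo_sub, inner_add_right]
  linarith

variable {a g : ℕ → ℝ} {zmd z w zag : ℕ → E}

theorem IsAMP.w_mem (h : IsAMP Z F G' a g zmd z w zag) {k : ℕ} (hk : 1 ≤ k) : w k ∈ Z := by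
  obtain ⟨-, -, hw, hstep⟩ := h
  cases k, hk using Nat.le_induction with
  | base => exact hw
  | succ k hk => exact (hstep k hk).2.2.1.1

theorem IsAMP.zag_mem (h : IsAMP Z F G' a g zmd z w zag) (hZ : Convex ℝ Z)
    (ha : ∀ k, 1 ≤ k → a k ∈ Set.Icc 0 1) {k : ℕ} (hk : 1 ≤ k) : zag k ∈ Z := by
  obtain ⟨-, hzag, hw, hstep⟩ := h
  induction k, hk using Nat.le_induction with
  | base => exact hzag ▸ hw
  | succ k hk ih =>
    obtain ⟨-, ⟨hz, -⟩, -, hzag_succ⟩ := hstep k hk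
    exact hzag_succ ▸ hZ ih hz (sub_nonneg.2 (ha k hk).2) (ha k hk).1 (sub_add_cancel 1 (a k))

theorem statement_6_general [CompleteSpace E] {L α : ℝ}
    (hF : ∀ x ∈ Z, ∀ y ∈ Z, α * ‖x - y‖ ^ 2 ≤ ⟪x - y, F x - F y⟫_ℝ)
    (hG : ConvexOn ℝ Z G) (hG' : ∀ x ∈ Z, HasGradientWithinAt G (G' x) Z x)
    (hL : ∀ x ∈ Z, ∀ y ∈ Z, ‖G' x - G' y‖ ≤ L * ‖x - y‖)
    (ha : ∀ k, 1 ≤ k → a k ∈ Set.Icc 0 1) (hAMP : IsAMP Z F G' a g zmd z w zag)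
    (k : ℕ) (hk : 1 ≤ k) (y : E) (hy : y ∈ Z) :
    gapFunction G F (zag (k + 1)) y - (1 - a k) * gapFunction G F (zag k) y ≤
      a k * ⟪z (k + 1) - y, F (z (k + 1)) + G' (zmd k)⟫_ℝ +
        a k ^ 2 * L / 2 * ‖z (k + 1) - w k‖ ^ 2 - a k * α * ‖z (k + 1) - y‖ ^ 2 := by
  obtain ⟨hzmd, ⟨hz, -⟩, -, hzag_succ⟩ := hAMP.2.2.2 k hk
  have hw : w k ∈ Z := hAMP.w_mem hk
  have hzag : zag k ∈ Z := hAMP.zag_mem hG.1 ha hk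
  have hzmd_mem : zmd k ∈ Z :=
    hzmd ▸ hG.1 hzag hw (sub_nonneg.2 (ha k hk).2) (ha k hk).1 (sub_add_cancel 1 (a k))
  rw [hzag_succ]
  exact gapFunction_combo_sub_le (hF _ hz y hy) hG hG' (fun x hx => hL x hx _ hzmd_mem)
    (ha k hk) hzmd hzag hw hy hz

end InnerProductSpace

/-- Lemma AMP-gap.  Suppose `F` is `α`-strongly monotone on `Z` with
`α ≥ 0` and `G` is `ℓ_G`-smooth and convex on `Z`, and let the iterates be generated by the
AMP iteration with parameters `α_k ∈ (0,1)`, `γ_k > 0`.  Then, with the gap function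
`Q(z̃, z) = G(z̃) - G(z) + ⟪z̃ - z, F(z)⟫`, for every `k ≥ 1` and every `z ∈ Z`:
`Q(z_{k+1}^{ag}, z) - (1 - α_k) Q(z_k^{ag}, z) ≤
  α_k ⟪z_{k+1} - z, F(z_{k+1}) + ∇G(z_k^{md})⟫ + (α_k² ℓ_G / 2)‖z_{k+1} - w_k‖²
  - α_k α ‖z_{k+1} - z‖²`. -/
theorem statement_6 {n : ℕ} (Z : Set (EuclideanSpace ℝ (Fin n)))
    (hZne : Z.Nonempty) (hZclosed : IsClosed Z) (hZconvex : Convex ℝ Z)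
    (ℓG α : ℝ) (hα : 0 ≤ α)
    (F : EuclideanSpace ℝ (Fin n) → EuclideanSpace ℝ (Fin n))
    (hFsmono : ∀ z ∈ Z, ∀ z' ∈ Z, α * ‖z - z'‖ ^ 2 ≤ ⟪z - z', F z - F z'⟫_ℝ)
    (G : EuclideanSpace ℝ (Fin n) → ℝ) (G' : EuclideanSpace ℝ (Fin n) → EuclideanSpace ℝ (Fin n))
    (hGconv : ConvexOn ℝ Z G)
    (hGgrad : ∀ z ∈ Z, HasGradientAt G (G' z) z)
    (hGlip : ∀ z ∈ Z, ∀ z' ∈ Z, ‖G' z - G' z'‖ ≤ ℓG * ‖z - z'‖)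
    (a g : ℕ → ℝ) (ha : ∀ k, 1 ≤ k → 0 < a k ∧ a k < 1) (hg : ∀ k, 1 ≤ k → 0 < g k)
    (zmd z w zag : ℕ → EuclideanSpace ℝ (Fin n))
    (hAMP : IsAMP Z F G' a g zmd z w zag) :
    ∀ k : ℕ, 1 ≤ k → ∀ y ∈ Z,
      (G (zag (k + 1)) - G y + ⟪zag (k + 1) - y, F y⟫_ℝ) -
          (1 - a k) * (G (zag k) - G y + ⟪zag k - y, F y⟫_ℝ) ≤
        a k * ⟪z (k + 1) - y, F (z (k + 1)) + G' (zmd k)⟫_ℝ +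
          a k ^ 2 * ℓG / 2 * ‖z (k + 1) - w k‖ ^ 2 - a k * α * ‖z (k + 1) - y‖ ^ 2 :=
  statement_6_general hFsmono hGconv (fun x hx => (hGgrad x hx).hasFDerivAt.hasFDerivWithinAt)
    hGlip (fun k hk => ⟨(ha k hk).1.le, (ha k hk).2.le⟩) hAMP
end
end

section
/- Suppose F : Z → ℝ^n is ℓ_F-Lipschitz and α-strongly monotone (α > 0) and G : Z → ℝ is ℓ_G-smooth and convex, and the AMP iteration is run with constant parameters α_k ≡ α_0 = (1/4)·min{α/ℓ_F, √(α/ℓ_G)} and γ_k = α_0/α. For any fixed z ∈ Z define the energy E_k = Q(z_k^{ag}, z) + (α/2)‖z − w_k‖², where Q(z̃, z) = G(z̃) − G(z) + (z̃ − z)ᵀ F(z). Then E_{k+1} ≤ (1 − α_0) E_k for all k ≥ 1. -/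
open scoped InnerProductSpace

noncomputable section

/-!
Prediction and correction are projections of `w_k` along two directions, so their variational
inequalities combine into the extragradient estimate: the linear term at `z_{k+1}` is paid for by
the decrease of `‖y - w‖²`, with a surplus proportional to `‖z_{k+1} - w_k‖²`. Since
`z_{k+1}^{ag} - z_k^{md} = α_k (z_{k+1} - w_k)`, the accelerated averaging of `G` costs only
`(ℓ_G / 2) α_k² ‖z_{k+1} - w_k‖²`. Strong monotonicity contributes `-α α_k ‖z_{k+1} - y‖²`; together
with the remaining surplus this is at most `-(α α_k / 2) ‖y - w_k‖²`, the contraction of the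
distance term.
-/

section ProximalStep

open Set

variable {E : Type*} [NormedAddCommGroup E] [InnerProductSpace ℝ E]

theorem norm_sub_sq_le_two_mul_add (x y z : E) :
    ‖x - z‖ ^ 2 ≤ 2 * (‖y - x‖ ^ 2 + ‖y - z‖ ^ 2) := by
  have h := parallelogram_law_with_norm ℝ (y - z) (y - x)
  rw [sub_sub_sub_cancel_left] at h
  nlinarith [sq_nonneg ‖y - z + (y - x)‖]

theorem strong_monotone_const_le_lipschitz_const {Z : Set E} (hZ : Z.Nontrivial) {F : E → E}
    {ℓ α : ℝ} (hLip : ∀ x ∈ Z, ∀ y ∈ Z, ‖F x - F y‖ ≤ ℓ * ‖x - y‖)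
    (hmono : ∀ x ∈ Z, ∀ y ∈ Z, α * ‖x - y‖ ^ 2 ≤ ⟪x - y, F x - F y⟫_ℝ) : α ≤ ℓ := by
  obtain ⟨x, hx, y, hy, hne⟩ := hZ
  refine le_of_mul_le_mul_right ?_ (pow_pos (norm_sub_pos_iff.2 hne) 2)
  calc
    α * ‖x - y‖ ^ 2 ≤ ⟪x - y, F x - F y⟫_ℝ := hmono x hx y hy
    _ ≤ ‖x - y‖ * ‖F x - F y‖ := real_inner_le_norm _ _
    _ ≤ ‖x - y‖ * (ℓ * ‖x - y‖) := by gcongr; exact hLip x hx y hy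
    _ = ℓ * ‖x - y‖ ^ 2 := by ring

namespace IsArgminStep

variable {Z : Set E} {w u v p q y : E} {γ ℓ : ℝ}

theorem norm_sub_le (h : IsArgminStep Z w γ u p) (hy : y ∈ Z) :
    ‖w - γ • u - p‖ ≤ ‖w - γ • u - y‖ := by
  have completed_square (x : E) :
      ‖w - γ • u - x‖ ^ 2 = 2 * (γ * ⟪x - w, u⟫_ℝ + ‖x - w‖ ^ 2 / 2) + ‖γ • u‖ ^ 2 := by
    rw [show w - γ • u - x = -((x - w) + γ • u) by abel, norm_neg, norm_add_sq_real,
      real_inner_smul_right]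
    ring
  refine le_of_sq_le_sq ?_ (norm_nonneg _)
  linarith [completed_square p, completed_square y, h.2 y hy]

theorem inner_sub_nonpos (hZ : Convex ℝ Z) (h : IsArgminStep Z w γ u p) (hy : y ∈ Z) :
    ⟪w - γ • u - p, y - p⟫_ℝ ≤ 0 := by
  have : Nonempty Z := ⟨⟨p, h.1⟩⟩
  have hinf : ‖w - γ • u - p‖ = ⨅ x : Z, ‖w - γ • u - x‖ :=
    le_antisymm (le_ciInf fun x => h.norm_sub_le x.2)
      (ciInf_le ⟨0, forall_mem_range.2 fun _ => norm_nonneg _⟩ (⟨p, h.1⟩ : Z))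
  exact (norm_eq_iInf_iff_real_inner_le_zero hZ h.1).1 hinf y hy

theorem three_point_inner_le (hZ : Convex ℝ Z) (h : IsArgminStep Z w γ u p) (hy : y ∈ Z) :
    γ * ⟪p - y, u⟫_ℝ ≤ (‖y - w‖ ^ 2 - ‖y - p‖ ^ 2 - ‖p - w‖ ^ 2) / 2 := by
  have hvar := h.inner_sub_nonpos hZ hy
  have hsplit : ⟪w - γ • u - p, y - p⟫_ℝ = γ * ⟪p - y, u⟫_ℝ - ⟪y - p, p - w⟫_ℝ := by
    rw [real_inner_comm, ← neg_sub y p, inner_neg_left]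
    simp only [inner_sub_right, real_inner_smul_right]
    ring
  have hnorm : ‖y - w‖ ^ 2 = ‖y - p‖ ^ 2 + 2 * ⟪y - p, p - w⟫_ℝ + ‖p - w‖ ^ 2 := by
    rw [← norm_add_sq_real, sub_add_sub_cancel]
  linarith

theorem extragradient_inner_le (hZ : Convex ℝ Z) (hp : IsArgminStep Z w γ u p)
    (hq : IsArgminStep Z w γ v q) (hy : y ∈ Z) :
    γ * ⟪p - y, v⟫_ℝ ≤
      (‖y - w‖ ^ 2 - ‖y - q‖ ^ 2 - ‖p - w‖ ^ 2 + γ ^ 2 * ‖v - u‖ ^ 2) / 2 := by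
  have hcorrection := hq.three_point_inner_le hZ hy
  have hprediction := hp.three_point_inner_le hZ hq.1
  have hinner : ⟪p - y, v⟫_ℝ = ⟪q - y, v⟫_ℝ + ⟪p - q, u⟫_ℝ + ⟪p - q, v - u⟫_ℝ := by
    simp only [inner_sub_left, inner_sub_right]
    ring
  have hyoung : 2 * (γ * ⟪p - q, v - u⟫_ℝ) ≤ ‖q - p‖ ^ 2 + γ ^ 2 * ‖v - u‖ ^ 2 := by
    have h := sq_nonneg ‖(p - q) - γ • (v - u)‖
    rw [norm_sub_sq_real, real_inner_smul_right, norm_smul, mul_pow, Real.norm_eq_abs, sq_abs,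
      norm_sub_rev p q] at h
    linarith
  rw [hinner]
  linarith

theorem extragradient_inner_le_of_norm_sub_le (hZ : Convex ℝ Z) (hp : IsArgminStep Z w γ u p)
    (hq : IsArgminStep Z w γ v q) (hvu : ‖v - u‖ ≤ ℓ * ‖p - w‖) (hy : y ∈ Z) :
    γ * ⟪p - y, v⟫_ℝ ≤
      (‖y - w‖ ^ 2 - ‖y - q‖ ^ 2 - (1 - γ ^ 2 * ℓ ^ 2) * ‖p - w‖ ^ 2) / 2 := by
  have hsq : γ ^ 2 * ‖v - u‖ ^ 2 ≤ γ ^ 2 * (ℓ * ‖p - w‖) ^ 2 := by gcongr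
  linarith [hp.extragradient_inner_le hZ hq hy]

end IsArgminStep

theorem IsAMP.mem {Z : Set E} {F G' : E → E} {a g : ℕ → ℝ} {zmd z w zag : ℕ → E}
    (h : IsAMP Z F G' a g zmd z w zag)
    (hcombo : ∀ k, ∀ x ∈ Z, ∀ y ∈ Z, (1 - a k) • x + a k • y ∈ Z) {k : ℕ} (hk : 1 ≤ k) :
    w k ∈ Z ∧ zag k ∈ Z := by
  induction k, hk using Nat.le_induction with
  | base => exact ⟨h.2.2.1, h.2.1 ▸ h.2.2.1⟩
  | succ k hk ih =>
    obtain ⟨-, hz, hw, hzag⟩ := h.2.2.2 k hk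
    exact ⟨hw.1, hzag ▸ hcombo k _ ih.2 _ hz.1⟩

end ProximalStep

section SmoothConvex

open AffineMap Set

variable {E : Type*} [NormedAddCommGroup E] [InnerProductSpace ℝ E]
  {Z : Set E} {G : E → ℝ} {G' : E → E} {x y : E} {ℓ : ℝ}

theorem inner_gradient_lineMap_le (hZ : Convex ℝ Z)
    (hLip : ∀ x ∈ Z, ∀ y ∈ Z, ‖G' x - G' y‖ ≤ ℓ * ‖x - y‖) (hx : x ∈ Z) (hy : y ∈ Z) {t : ℝ}
    (ht : t ∈ Icc (0 : ℝ) 1) :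
    ⟪G' (lineMap x y t), y - x⟫_ℝ ≤ ⟪G' x, y - x⟫_ℝ + ℓ * ‖y - x‖ ^ 2 * t := by
  have hnorm : ‖G' (lineMap x y t) - G' x‖ ≤ ℓ * (t * ‖y - x‖) := by
    have h := hLip _ (hZ.lineMap_mem hx hy ht) x hx
    rwa [← dist_eq_norm (lineMap x y t), dist_lineMap_left, Real.norm_of_nonneg ht.1,
      dist_eq_norm'] at h
  have hCS : ⟪G' (lineMap x y t) - G' x, y - x⟫_ℝ ≤ ℓ * (t * ‖y - x‖) * ‖y - x‖ :=
    (real_inner_le_norm _ _).trans (by gcongr)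
  rw [inner_sub_left] at hCS
  linarith

variable [CompleteSpace E]

theorem hasDerivWithinAt_comp_lineMap_s7 {g : E} {t : ℝ}
    (h : HasGradientWithinAt G g Z (lineMap x y t)) :
    HasDerivWithinAt (G ∘ lineMap x y) ⟪g, y - x⟫_ℝ (lineMap x y ⁻¹' Z) t := by
  have hcomp := h.hasFDerivWithinAt.comp_hasDerivWithinAt t hasDerivWithinAt_lineMap
    (mapsTo_preimage (lineMap x y) Z)
  rwa [InnerProductSpace.toDual_apply_apply] at hcomp

theorem add_inner_gradient_le_of_convexOn (hG : ConvexOn ℝ Z G) {g : E} (hx : x ∈ Z) (hy : y ∈ Z)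
    (hg : HasGradientWithinAt G g Z x) : G x + ⟪g, y - x⟫_ℝ ≤ G y := by
  have hslope := (hG.comp_affineMap (lineMap x y : ℝ →ᵃ[ℝ] E)).le_slope_of_hasDerivWithinAt
    (by simpa using hx) (by simpa using hy) zero_lt_one
    (hasDerivWithinAt_comp_lineMap_s7 (by simpa using hg))
  simp only [slope_def_field, Function.comp_apply, lineMap_apply_one, lineMap_apply_zero,
    sub_zero, div_one] at hslope
  linarith

theorem le_add_inner_gradient_add_sq (hZ : Convex ℝ Z)
    (hgrad : ∀ x ∈ Z, HasGradientWithinAt G (G' x) Z x)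
    (hLip : ∀ x ∈ Z, ∀ y ∈ Z, ‖G' x - G' y‖ ≤ ℓ * ‖x - y‖) (hx : x ∈ Z) (hy : y ∈ Z) :
    G y ≤ G x + ⟪G' x, y - x⟫_ℝ + ℓ / 2 * ‖y - x‖ ^ 2 := by
  have hsub : Icc (0 : ℝ) 1 ⊆ lineMap x y ⁻¹' Z := fun _ ht => hZ.lineMap_mem hx hy ht
  have hderiv (t : ℝ) (ht : t ∈ Icc (0 : ℝ) 1) :
      HasDerivWithinAt (G ∘ lineMap x y) ⟪G' (lineMap x y t), y - x⟫_ℝ (Icc 0 1) t :=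
    (hasDerivWithinAt_comp_lineMap_s7 (hgrad _ (hsub ht))).mono hsub
  have hmodel (t : ℝ) : HasDerivAt
      (fun s : ℝ => G x + s * ⟪G' x, y - x⟫_ℝ + ℓ / 2 * ‖y - x‖ ^ 2 * s ^ 2)
      (⟪G' x, y - x⟫_ℝ + ℓ * ‖y - x‖ ^ 2 * t) t := by
    refine ((((hasDerivAt_id t).mul_const ⟪G' x, y - x⟫_ℝ).const_add (G x)).add
      ((hasDerivAt_pow 2 t).const_mul (ℓ / 2 * ‖y - x‖ ^ 2))).congr_deriv ?_
    push_cast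
    ring
  have hle := image_le_of_deriv_right_le_deriv_boundary
    (fun t ht => (hderiv t ht).continuousWithinAt)
    (fun t ht => (hderiv t (Ico_subset_Icc_self ht)).mono_of_mem_nhdsWithin
      (Icc_mem_nhdsGE_of_mem ht))
    (by simp) (fun t _ => (hmodel t).continuousAt.continuousWithinAt)
    (fun t _ => (hmodel t).hasDerivWithinAt)
    (fun t ht => inner_gradient_lineMap_le hZ hLip hx hy (Ico_subset_Icc_self ht))
    (right_mem_Icc.2 zero_le_one)
  simpa using hle

theorem accelerated_average_le (hG : ConvexOn ℝ Z G)
    (hgrad : ∀ x ∈ Z, HasGradientWithinAt G (G' x) Z x)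
    (hLip : ∀ x ∈ Z, ∀ y ∈ Z, ‖G' x - G' y‖ ≤ ℓ * ‖x - y‖) {b w p m c : E} {a : ℝ}
    (ha : a ∈ Icc (0 : ℝ) 1) (hb : b ∈ Z) (hw : w ∈ Z) (hp : p ∈ Z) (hy : y ∈ Z)
    (hm : m = (1 - a) • b + a • w) (hc : c = (1 - a) • b + a • p) :
    G c ≤ (1 - a) * G b + a * (G y + ⟪p - y, G' m⟫_ℝ) + ℓ / 2 * a ^ 2 * ‖p - w‖ ^ 2 := by
  have ha' : 0 ≤ 1 - a := sub_nonneg.2 ha.2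
  have hmZ : m ∈ Z := hm ▸ hG.1 hb hw ha' ha.1 (sub_add_cancel 1 a)
  have hcZ : c ∈ Z := hc ▸ hG.1 hb hp ha' ha.1 (sub_add_cancel 1 a)
  have hdescent := le_add_inner_gradient_add_sq hG.1 hgrad hLip hmZ hcZ
  have hlower_b := add_inner_gradient_le_of_convexOn hG hmZ hb (hgrad m hmZ)
  have hlower_y := add_inner_gradient_le_of_convexOn hG hmZ hy (hgrad m hmZ)
  have hnorm : ‖c - m‖ ^ 2 = a ^ 2 * ‖p - w‖ ^ 2 := by
    rw [show c - m = a • (p - w) by rw [hc, hm]; module, norm_smul, mul_pow, Real.norm_eq_abs,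
      sq_abs]
  have hinner : ⟪G' m, c - m⟫_ℝ =
      (1 - a) * ⟪G' m, b - m⟫_ℝ + a * ⟪G' m, y - m⟫_ℝ + a * ⟪p - y, G' m⟫_ℝ := by
    rw [show c - m = (1 - a) • (b - m) + a • (y - m) + a • (p - y) by rw [hc]; module,
      real_inner_comm (G' m) (p - y)]
    simp only [inner_add_right, real_inner_smul_right]
  rw [hnorm, hinner] at hdescent
  linarith [mul_le_mul_of_nonneg_left hlower_b ha', mul_le_mul_of_nonneg_left hlower_y ha.1]

end SmoothConvex

section Energy

open Set

variable {E : Type*} [NormedAddCommGroup E] [InnerProductSpace ℝ E]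

/-- The gap function `Q(x, y) = G(x) - G(y) + ⟪x - y, F(y)⟫` of the variational inequality for
`∇G + F`; the reference point `y` comes first. -/
def gap (G : E → ℝ) (F : E → E) (y x : E) : ℝ :=
  G x - G y + ⟪x - y, F y⟫_ℝ

/-- The energy `Q(x, y) + (α/2) ‖y - v‖²` relative to the reference point `y`. Along the AMP
iteration it is evaluated at `x = z_k^{ag}` and `v = w_k`. -/
def energy (G : E → ℝ) (F : E → E) (α : ℝ) (y x v : E) : ℝ :=
  gap G F y x + α / 2 * ‖y - v‖ ^ 2

theorem energy_self (G : E → ℝ) (F : E → E) (α : ℝ) (y : E) : energy G F α y y y = 0 := by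
  simp [energy, gap]

variable [CompleteSpace E] {Z : Set E} {F : E → E} {G : E → ℝ} {G' : E → E} {ℓF ℓG α : ℝ}

theorem gap_average_le (hG : ConvexOn ℝ Z G)
    (hgrad : ∀ x ∈ Z, HasGradientWithinAt G (G' x) Z x)
    (hGLip : ∀ x ∈ Z, ∀ y ∈ Z, ‖G' x - G' y‖ ≤ ℓG * ‖x - y‖)
    (hmono : ∀ x ∈ Z, ∀ y ∈ Z, α * ‖x - y‖ ^ 2 ≤ ⟪x - y, F x - F y⟫_ℝ)
    {b w p m c y : E} {a : ℝ} (ha : a ∈ Icc (0 : ℝ) 1) (hb : b ∈ Z) (hw : w ∈ Z) (hp : p ∈ Z)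
    (hy : y ∈ Z) (hm : m = (1 - a) • b + a • w) (hc : c = (1 - a) • b + a • p) :
    gap G F y c ≤ (1 - a) * gap G F y b + a * (⟪p - y, F p + G' m⟫_ℝ - α * ‖p - y‖ ^ 2)
      + ℓG / 2 * a ^ 2 * ‖p - w‖ ^ 2 := by
  have hsmooth := accelerated_average_le hG hgrad hGLip ha hb hw hp hy hm hc
  have hinner : ⟪c - y, F y⟫_ℝ = (1 - a) * ⟪b - y, F y⟫_ℝ + a * ⟪p - y, F y⟫_ℝ := by
    rw [show c - y = (1 - a) • (b - y) + a • (p - y) by rw [hc]; module]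
    simp only [inner_add_left, real_inner_smul_left]
  have hFy : a * ⟪p - y, F y⟫_ℝ ≤ a * (⟪p - y, F p⟫_ℝ - α * ‖p - y‖ ^ 2) := by
    have h := hmono p hp y hy
    rw [inner_sub_right] at h
    exact mul_le_mul_of_nonneg_left (by linarith) ha.1
  rw [gap, gap, hinner, inner_add_right]
  linarith

theorem IsAMP.energy_succ_le (hG : ConvexOn ℝ Z G)
    (hgrad : ∀ x ∈ Z, HasGradientWithinAt G (G' x) Z x)
    (hGLip : ∀ x ∈ Z, ∀ y ∈ Z, ‖G' x - G' y‖ ≤ ℓG * ‖x - y‖)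
    (hFLip : ∀ x ∈ Z, ∀ y ∈ Z, ‖F x - F y‖ ≤ ℓF * ‖x - y‖)
    (hmono : ∀ x ∈ Z, ∀ y ∈ Z, α * ‖x - y‖ ^ 2 ≤ ⟪x - y, F x - F y⟫_ℝ) (hα : 0 ≤ α)
    {a g : ℕ → ℝ} {zmd z w zag : ℕ → E} (h : IsAMP Z F G' a g zmd z w zag)
    (ha : ∀ k, a k ∈ Icc (0 : ℝ) 1) {k : ℕ} (hk : 1 ≤ k) (hag : a k = α * g k)
    (hstep : g k ^ 2 * (ℓF ^ 2 + α * ℓG) + 2 * a k ≤ 1) {y : E} (hy : y ∈ Z) :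
    energy G F α y (zag (k + 1)) (w (k + 1)) ≤ (1 - a k) * energy G F α y (zag k) (w k) := by
  obtain ⟨hwZ, hagZ⟩ :=
    h.mem (fun j _ hx _ hx' => hG.1 hx hx' (sub_nonneg.2 (ha j).2) (ha j).1 (by ring)) hk
  obtain ⟨hmd, hpred, hcorr, hzag⟩ := h.2.2.2 k hk
  have hgap := gap_average_le hG hgrad hGLip hmono (ha k) hagZ hwZ hpred.1 hy hmd hzag
  have hextra := hpred.extragradient_inner_le_of_norm_sub_le hG.1 hcorr
    (by simpa using hFLip _ hpred.1 _ hwZ) hy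
  have hdist := norm_sub_sq_le_two_mul_add y (z (k + 1)) (w k)
  have hsurplus : 0 ≤ α / 2 * ‖z (k + 1) - w k‖ ^ 2
      * (1 - (g k ^ 2 * (ℓF ^ 2 + α * ℓG) + 2 * a k)) :=
    mul_nonneg (by positivity) (sub_nonneg.2 hstep)
  have hcontract := mul_le_mul_of_nonneg_left hdist (mul_nonneg (ha k).1 hα)
  have hscaled := mul_le_mul_of_nonneg_left hextra hα
  rw [energy, energy]
  simp only [hag] at hgap hsurplus hcontract hscaled ⊢
  linarith

/-- The constant weight `α_0 = (1/4) min {α/ℓ_F, √(α/ℓ_G)}` of the AMP iteration for an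
`α`-strongly monotone operator; the matching step size is `α_0 / α`. -/
def ampWeight (ℓF ℓG α : ℝ) : ℝ :=
  min (α / ℓF) √(α / ℓG) / 4

theorem ampWeight_mem_Icc (hℓF : 0 < ℓF) (hα : 0 ≤ α) (hαF : α ≤ ℓF) :
    ampWeight ℓF ℓG α ∈ Icc 0 (1 / 4) := by
  have hmin_nonneg : 0 ≤ min (α / ℓF) √(α / ℓG) := by positivity
  have hmin_le : min (α / ℓF) √(α / ℓG) ≤ 1 :=
    (min_le_left _ _).trans ((div_le_one hℓF).2 hαF)
  rw [ampWeight]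
  constructor <;> linarith

theorem ampWeight_mul_le (hℓF : 0 < ℓF) : ampWeight ℓF ℓG α * ℓF ≤ α / 4 := by
  have hmin := (le_div_iff₀ hℓF).1 (min_le_left (α / ℓF) √(α / ℓG))
  rw [ampWeight]
  linarith

theorem ampWeight_sq_mul_le (hℓF : 0 < ℓF) (hℓG : 0 < ℓG) (hα : 0 ≤ α) :
    ampWeight ℓF ℓG α ^ 2 * ℓG ≤ α / 16 := by
  have hmin := (le_div_iff₀ hℓG).1 <| (Real.le_sqrt (by positivity) (by positivity)).1
    (min_le_right (α / ℓF) √(α / ℓG))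
  rw [ampWeight]
  linarith

theorem ampWeight_step_le_one (hℓF : 0 < ℓF) (hℓG : 0 < ℓG) (hα : 0 < α) (hαF : α ≤ ℓF) :
    (ampWeight ℓF ℓG α / α) ^ 2 * (ℓF ^ 2 + α * ℓG) + 2 * ampWeight ℓF ℓG α ≤ 1 := by
  obtain ⟨hnonneg, hquarter⟩ := ampWeight_mem_Icc (ℓG := ℓG) hℓF hα.le hαF
  have hF : (ampWeight ℓF ℓG α * ℓF) ^ 2 ≤ (α / 4) ^ 2 :=
    pow_le_pow_left₀ (by positivity) (ampWeight_mul_le hℓF) 2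
  have hG := mul_le_mul_of_nonneg_left (ampWeight_sq_mul_le hℓF hℓG hα.le) hα.le
  have hsq : (ampWeight ℓF ℓG α / α) ^ 2 * (ℓF ^ 2 + α * ℓG) ≤ 1 / 8 := by
    rw [div_pow, div_mul_eq_mul_div, div_le_iff₀ (by positivity)]
    linarith
  linarith

theorem statement_7_general (hG : ConvexOn ℝ Z G)
    (hgrad : ∀ x ∈ Z, HasGradientWithinAt G (G' x) Z x)
    (hGLip : ∀ x ∈ Z, ∀ y ∈ Z, ‖G' x - G' y‖ ≤ ℓG * ‖x - y‖)
    (hFLip : ∀ x ∈ Z, ∀ y ∈ Z, ‖F x - F y‖ ≤ ℓF * ‖x - y‖)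
    (hmono : ∀ x ∈ Z, ∀ y ∈ Z, α * ‖x - y‖ ^ 2 ≤ ⟪x - y, F x - F y⟫_ℝ)
    (hℓF : 0 < ℓF) (hℓG : 0 < ℓG) (hα : 0 < α) {zmd z w zag : ℕ → E}
    (hAMP : IsAMP Z F G' (fun _ => ampWeight ℓF ℓG α) (fun _ => ampWeight ℓF ℓG α / α)
      zmd z w zag)
    {y : E} (hy : y ∈ Z) {k : ℕ} (hk : 1 ≤ k) :
    energy G F α y (zag (k + 1)) (w (k + 1)) ≤
      (1 - ampWeight ℓF ℓG α) * energy G F α y (zag k) (w k) := by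
  rcases Z.subsingleton_or_nontrivial with hsub | hnontriv
  · -- On a single point `α ≤ ℓF` may fail, and then the weight may exceed `1`.
    have hmem {j : ℕ} (hj : 1 ≤ j) : w j ∈ Z ∧ zag j ∈ Z := hAMP.mem
      (fun _ x hx x' hx' => by rwa [hsub hx' hx, ← add_smul, sub_add_cancel, one_smul]) hj
    have henergy {j : ℕ} (hj : 1 ≤ j) : energy G F α y (zag j) (w j) = 0 := by
      rw [hsub (hmem hj).1 hy, hsub (hmem hj).2 hy, energy_self]
    rw [henergy hk, henergy (Nat.le_add_left 1 k), mul_zero]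
  · have hαF : α ≤ ℓF := strong_monotone_const_le_lipschitz_const hnontriv hFLip hmono
    have hweight : ampWeight ℓF ℓG α ∈ Icc 0 1 :=
      Icc_subset_Icc_right (by norm_num) (ampWeight_mem_Icc hℓF hα.le hαF)
    exact hAMP.energy_succ_le hG hgrad hGLip hFLip hmono hα.le (fun _ => hweight) hk
      (mul_div_cancel₀ _ hα.ne').symm (ampWeight_step_le_one hℓF hℓG hα hαF) hy

end Energy

/-- energy decrease in the strongly monotone case.
Suppose `F` is `ℓ_F`-Lipschitz and `α`-strongly monotone on `Z` (`α > 0`), `G` is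
`ℓ_G`-smooth and convex on `Z`, and the AMP iteration is run with the constant parameters
`α_k ≡ α_0 = (1/4) min {α/ℓ_F, √(α/ℓ_G)}` and `γ_k = α_0/α`.  For fixed `z ∈ Z`, the
energy `E_k = Q(z_k^{ag}, z) + (α/2)‖z - w_k‖²` with
`Q(z̃, z) = G(z̃) - G(z) + ⟪z̃ - z, F(z)⟫` satisfies `E_{k+1} ≤ (1 - α_0) E_k` for all
`k ≥ 1`. -/
theorem statement_7 {n : ℕ} (Z : Set (EuclideanSpace ℝ (Fin n)))
    (hZne : Z.Nonempty) (hZclosed : IsClosed Z) (hZconvex : Convex ℝ Z)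
    (ℓF ℓG α : ℝ) (hℓF : 0 < ℓF) (hℓG : 0 < ℓG) (hα : 0 < α)
    (F : EuclideanSpace ℝ (Fin n) → EuclideanSpace ℝ (Fin n))
    (hFlip : ∀ z ∈ Z, ∀ z' ∈ Z, ‖F z - F z'‖ ≤ ℓF * ‖z - z'‖)
    (hFsmono : ∀ z ∈ Z, ∀ z' ∈ Z, α * ‖z - z'‖ ^ 2 ≤ ⟪z - z', F z - F z'⟫_ℝ)
    (G : EuclideanSpace ℝ (Fin n) → ℝ) (G' : EuclideanSpace ℝ (Fin n) → EuclideanSpace ℝ (Fin n))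
    (hGconv : ConvexOn ℝ Z G)
    (hGgrad : ∀ z ∈ Z, HasGradientAt G (G' z) z)
    (hGlip : ∀ z ∈ Z, ∀ z' ∈ Z, ‖G' z - G' z'‖ ≤ ℓG * ‖z - z'‖)
    (zmd z w zag : ℕ → EuclideanSpace ℝ (Fin n))
    (hAMP : IsAMP Z F G' (fun _ => min (α / ℓF) (Real.sqrt (α / ℓG)) / 4)
      (fun _ => min (α / ℓF) (Real.sqrt (α / ℓG)) / 4 / α) zmd z w zag)
    (y : EuclideanSpace ℝ (Fin n)) (hy : y ∈ Z) :
    ∀ k : ℕ, 1 ≤ k →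
      (G (zag (k + 1)) - G y + ⟪zag (k + 1) - y, F y⟫_ℝ) + α / 2 * ‖y - w (k + 1)‖ ^ 2 ≤
        (1 - min (α / ℓF) (Real.sqrt (α / ℓG)) / 4) *
          ((G (zag k) - G y + ⟪zag k - y, F y⟫_ℝ) + α / 2 * ‖y - w k‖ ^ 2) := fun _ hk =>
  statement_7_general hGconv (fun x hx => (hGgrad x hx).hasFDerivAt.hasFDerivWithinAt) hGlip
    hFlip hFsmono hℓF hℓG hα hAMP hy hk
end
end
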